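/- arXiv:1309.6239 — 2 statements merged into one kernel-verified Lean document; each statement's English description precedes it below -/
import Mathlib

section
/- Let s ≥ 1 and let m_1 < m_2 < ⋯ < m_{2s+1} be integers with m_1 ≥ 0. Let p be the partition [(2m_{2s+1}+1)(2m_{2s}+1)⋯(2m_2+1)(2m_1)] (the part 2m_1 omitted if m_1 = 0), and let c be the partition [(2m_{2s+1})(2m_{2s}+2)(2m_{2s−1})(2m_{2s−2}+2)⋯(2m_3)(2m_2+2)(2m_1)], i.e. with parts 2m_{2j+1} and 2m_{2j}+2 for j = s, s−1, …, 1 together with the part 2m_1 (omitted if m_1 = 0). Then c is symplectic, c is dominated by p in the dominance order, and every symplectic partition dominated by p is dominated by c; that is, c is the Sp-collapse p_{Sp}. -/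
/-!
The parts of `p` are `2 m (i + 2) + 1` for `i < 2 s`, those of `c` arise from them by lowering the
parts with `i` odd by `1` and raising those with `i` even by `1`; both have the tail `2 m 1`.
Listed in decreasing order, the lowered and raised parts alternate, so the partial sums of `c` and
`p` agree except at odd `k < 2 s`, where that of `c` is smaller by exactly `1`
(`topSum_parts`, `sum_odd_parts`).  Hence `p` dominates `c`.

If `q` is symplectic and dominated by `p`, it remains to exclude equality of the `k`-th partial sums
of `q` and `p` at odd `k < 2 s`.  Equality there, with `≤` at `k - 1` and `k + 1`, forces
`q_k ≥ p_k > p_{k+1} ≥ q_{k+1}`.  So the `k` largest parts of `q` are all the parts of size at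
least `q_k`, and their sum is even because odd parts come in pairs (`even_topSum_of_drop`).  But the
`k`-th partial sum of `p` is a sum of an odd number of odd parts, which is odd.
-/

/-- The sum of the `k` largest elements of a multiset of natural numbers. -/
def Multiset.topSum (p : Multiset ℕ) (k : ℕ) : ℕ :=
  (((p.sort (· ≤ ·)).reverse).take k).sum

/-- Dominance order on partitions (finite multisets of positive integers) of the same
number: `Dominates p q` means `p` and `q` partition the same integer and, for every `k`,
the sum of the `k` largest parts of `p` is at least that of `q`. -/
def Dominates (p q : Multiset ℕ) : Prop :=
  p.sum = q.sum ∧ ∀ k, q.topSum k ≤ p.topSum k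

/-- A partition is symplectic if each of its odd parts occurs with even multiplicity. -/
def IsSymplectic (p : Multiset ℕ) : Prop :=
  ∀ a, Odd a → Even (p.count a)

/-- The transpose of a partition: the `i`-th part (for `i ≥ 1`) is the number of parts
that are `≥ i`; zero parts are discarded. -/
def transposeP (p : Multiset ℕ) : Multiset ℕ :=
  ((Multiset.range p.sum).map fun i => (p.filter fun a => i + 1 ≤ a).card).filter (0 < ·)

/-- `qminus q` is `q⁻`: one occurrence of the smallest part `a` of `q` is replaced by
`a - 1` (deleted if `a = 1`). -/
def qminus (q : Multiset ℕ) : Multiset ℕ :=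
  match (q.sort (· ≤ ·)).head? with
  | none => 0
  | some a => if a ≤ 1 then q.erase a else (a - 1) ::ₘ q.erase a

/-- `IsSpCollapse p c` : `c` is the Sp-collapse of `p`, i.e. the greatest symplectic
partition dominated by `p` in the dominance order. -/
def IsSpCollapse (p c : Multiset ℕ) : Prop :=
  0 ∉ c ∧ IsSymplectic c ∧ Dominates p c ∧
    ∀ q : Multiset ℕ, 0 ∉ q → IsSymplectic q → Dominates p q → Dominates c q

/-- A symplectic partition is special if it has an even number of even parts between any
two consecutive (distinct) odd parts, and an even number of even parts greater than its
largest odd part. -/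
def IsSpecial (p : Multiset ℕ) : Prop :=
  IsSymplectic p ∧
    (∀ a b, a ∈ p → b ∈ p → Odd a → Odd b → a < b →
        (∀ c ∈ p, Odd c → ¬(a < c ∧ c < b)) →
        Even ((p.filter fun x => Even x ∧ a < x ∧ x < b).card)) ∧
    (∀ a, a ∈ p → Odd a → (∀ c ∈ p, Odd c → c ≤ a) →
        Even ((p.filter fun x => Even x ∧ a < x).card))

/-- `IsSpExpansion p e` : `e` is the Sp-expansion of `p`, i.e. the smallest special
symplectic partition dominating `p` in the dominance order. -/
def IsSpExpansion (p e : Multiset ℕ) : Prop :=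
  0 ∉ e ∧ IsSpecial e ∧ Dominates e p ∧
    ∀ q : Multiset ℕ, 0 ∉ q → IsSpecial q → Dominates q p → Dominates q e

/-! ### Parity of partial sums of symplectic partitions -/

/-- The sum of all parts of a symplectic partition that are at least `a` is even. -/
theorem IsSymplectic.even_sum_filter {q : Multiset ℕ} (hq : IsSymplectic q) (a : ℕ) :
    Even (q.filter (a ≤ ·)).sum := by
  rw [Finset.sum_multiset_count]
  refine Finset.even_sum _ fun x _ => ?_
  rw [smul_eq_mul]
  rcases Nat.even_or_odd x with hx | hx
  · exact hx.mul_left _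
  · refine Even.mul_right ?_ _
    rw [Multiset.count_filter]
    split_ifs
    · exact hq x hx
    · exact Even.zero

theorem pairwise_sort_reverse (q : Multiset ℕ) :
    ((q.sort (· ≤ ·)).reverse).Pairwise (· ≥ ·) := by
  rw [List.pairwise_reverse]
  exact q.pairwise_sort (· ≤ ·)

/-- Partial sums may be computed from any decreasing listing of the parts. -/
theorem topSum_coe {l : List ℕ} (hl : l.Pairwise (· ≥ ·)) (k : ℕ) :
    (l : Multiset ℕ).topSum k = (l.take k).sum := by
  have : ((l : Multiset ℕ).sort (· ≤ ·)).reverse = l := by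
    refine List.Perm.eq_of_pairwise (le := (· ≥ ·)) (fun a b _ _ h1 h2 => le_antisymm h2 h1)
      (pairwise_sort_reverse _) hl ?_
    rw [← Multiset.coe_eq_coe, Multiset.coe_reverse, Multiset.sort_eq]
  rw [Multiset.topSum, this]

/-- If the sequence of parts drops strictly after position `k + 1` (a strict concavity of the
partial sums there), then the `k + 1` largest parts of a symplectic partition are all its parts
above a threshold, and so have even sum. -/
theorem even_topSum_of_drop {q : Multiset ℕ} (hq : IsSymplectic q) (k : ℕ)
    (h : q.topSum k + q.topSum (k + 2) < 2 * q.topSum (k + 1)) :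
    Even (q.topSum (k + 1)) := by
  obtain ⟨L, hL, hLq⟩ : ∃ L : List ℕ, L.Pairwise (· ≥ ·) ∧ (L : Multiset ℕ) = q :=
    ⟨_, pairwise_sort_reverse q, by rw [Multiset.coe_reverse, Multiset.sort_eq]⟩
  subst hLq
  simp only [topSum_coe hL] at h ⊢
  -- `k < L.length`, since otherwise all three partial sums are the full sum
  have hk : k < L.length := by
    by_contra! hk
    rw [List.take_of_length_le hk, List.take_of_length_le (by omega),
      List.take_of_length_le (by omega)] at h
    omega
  have hget : ∀ i j (hi : i < L.length) (hj : j < L.length), i ≤ j → L[j] ≤ L[i] := by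
    intro i j hi hj hij
    rcases hij.eq_or_lt with rfl | hij
    · exact le_rfl
    · exact List.pairwise_iff_getElem.1 hL i j hi hj hij
  have h1 : (L.take (k + 1)).sum = (L.take k).sum + L[k] := by
    rw [List.take_succ_eq_append_getElem hk, List.sum_append, List.sum_singleton]
  have hdrop : ∀ x ∈ L.drop (k + 1), x < L[k] := by
    intro x hx
    obtain ⟨i, hi, rfl⟩ := List.mem_iff_getElem.1 hx
    rw [List.getElem_drop]
    have hi' : k + 1 + i < L.length := by rw [List.length_drop] at hi; omega
    have h2 : (L.take (k + 2)).sum = (L.take (k + 1)).sum + L[k + 1] := by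
      rw [List.take_succ_eq_append_getElem (by omega : k + 1 < L.length), List.sum_append,
        List.sum_singleton]
    have := hget (k + 1) (k + 1 + i) (by omega) hi' (by omega)
    omega
  have htake : ∀ x ∈ L.take (k + 1), L[k] ≤ x := by
    intro x hx
    obtain ⟨i, hi, rfl⟩ := List.mem_iff_getElem.1 hx
    rw [List.getElem_take]
    rw [List.length_take] at hi
    exact hget _ _ _ _ (by omega)
  have hfil : L.filter (fun x => decide (L[k] ≤ x)) = L.take (k + 1) := by
    generalize L[k] = a at hdrop htake
    conv_lhs => rw [← List.take_append_drop (k + 1) L]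
    rw [List.filter_append, List.filter_eq_self.2 (by simpa using htake),
      List.filter_eq_nil_iff.2 (by simpa using hdrop), List.append_nil]
  have := hq.even_sum_filter L[k]
  rwa [Multiset.filter_coe, hfil, Multiset.sum_coe] at this

/-! ### Partial sums of explicit partitions -/

theorem topSum_of_card_le {p : Multiset ℕ} {k : ℕ} (h : p.card ≤ k) : p.topSum k = p.sum := by
  rw [Multiset.topSum, List.take_of_length_le (by simpa using h), List.sum_reverse,
    ← Multiset.sum_coe, Multiset.sort_eq]

theorem sum_singleton_range (n : ℕ) (f : ℕ → ℕ) :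
    ∑ i ∈ Finset.range n, ({f i} : Multiset ℕ) = (Multiset.range n).map f := by
  have := Multiset.sum_map_singleton ((Multiset.range n).map f)
  rwa [Multiset.map_map] at this

/-- Partial sums of the partition with parts `g (n - 1) ≥ ⋯ ≥ g 0` and a last part `t`,
omitted if `t = 0`. -/
theorem topSum_parts (n t : ℕ) (g : ℕ → ℕ) (hg : ∀ i j, i < j → j < n → g i ≤ g j)
    (ht : ∀ i < n, t ≤ g i) (k : ℕ) :
    ((∑ i ∈ Finset.range n, ({g i} : Multiset ℕ)) +
      (if 0 < t then ({t} : Multiset ℕ) else 0)).topSum k =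
    ∑ i ∈ Finset.range (min k n), g (n - 1 - i) + if n < k then t else 0 := by
  have hL : (∑ i ∈ Finset.range n, ({g i} : Multiset ℕ)) +
      (if 0 < t then ({t} : Multiset ℕ) else 0) =
      (((List.range n).map (fun i => g (n - 1 - i)) ++ if 0 < t then [t] else [] : List ℕ) :
        Multiset ℕ) := by
    rw [← Multiset.coe_add]
    congr 1
    · rw [← Finset.sum_range_reflect, ← Multiset.map_coe, Multiset.coe_range]
      exact sum_singleton_range _ _
    · split_ifs <;> rfl
  rw [hL, topSum_coe]
  · rw [List.take_append, ← List.map_take, List.take_range, List.sum_append]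
    congr 1
    simp only [List.length_map, List.length_range]
    split_ifs with h1 h2 h2
    · obtain ⟨d, hd⟩ : ∃ d, k - n = d + 1 := ⟨k - n - 1, by omega⟩
      simp [hd]
    · simp [Nat.sub_eq_zero_of_le (not_lt.1 h2)]
    · simp; omega
    · simp
  · rw [List.pairwise_append]
    refine ⟨?_, by split_ifs <;> simp, ?_⟩
    · rw [List.pairwise_map]
      refine List.Pairwise.imp_of_mem ?_ List.pairwise_lt_range
      intro a b ha hb hab
      rw [List.mem_range] at ha hb
      exact hg _ _ (by omega) (by omega)
    · intro a ha b hb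
      obtain ⟨i, hi, rfl⟩ := List.mem_map.1 ha
      rw [List.mem_range] at hi
      split_ifs at hb
      · rw [List.mem_singleton] at hb
        subst hb
        exact ht _ (by omega)
      · simp at hb

/-! ### The parts of the collapse -/

/-- The `i`-th part of the collapse, in increasing order from `i = 0` and without the tail. -/
def collapsePart (m : ℕ → ℕ) (i : ℕ) : ℕ :=
  if i % 2 = 1 then 2 * m (i + 2) else 2 * m (i + 2) + 2

/-- The partial sums of the odd parts exceed those of the collapse by `1` at odd `k` and by `0` at
even `k`. -/
theorem sum_odd_parts (s : ℕ) (m : ℕ → ℕ) (k : ℕ) (hk : k ≤ 2 * s) :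
    ∑ i ∈ Finset.range k, (2 * m (2 * s - 1 - i + 2) + 1) =
      ∑ i ∈ Finset.range k, collapsePart m (2 * s - 1 - i) + k % 2 := by
  induction k with
  | zero => simp
  | succ k ih =>
    rw [Finset.sum_range_succ, Finset.sum_range_succ, ih (by omega)]
    generalize ∑ i ∈ Finset.range k, collapsePart m (2 * s - 1 - i) = A
    unfold collapsePart
    split_ifs <;> omega

theorem even_collapsePart (m : ℕ → ℕ) (i : ℕ) : Even (collapsePart m i) := by
  rw [Nat.even_iff]
  unfold collapsePart
  split_ifs <;> omega

theorem sum_pairs_eq (s : ℕ) (m : ℕ → ℕ) :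
    (∑ j ∈ Finset.range s, ({2 * m (2 * j + 3), 2 * m (2 * j + 2) + 2} : Multiset ℕ)) =
      ∑ i ∈ Finset.range (2 * s), ({collapsePart m i} : Multiset ℕ) := by
  induction s with
  | zero => simp
  | succ s ih =>
    rw [Finset.sum_range_succ, ih, Nat.mul_succ, Finset.sum_range_succ, Finset.sum_range_succ,
      add_assoc]
    congr 1
    have h1 : collapsePart m (2 * s) = 2 * m (2 * s + 2) + 2 := by
      unfold collapsePart; rw [if_neg (by omega)]
    have h2 : collapsePart m (2 * s + 1) = 2 * m (2 * s + 3) := by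
      unfold collapsePart; rw [if_pos (by omega)]
    rw [h1, h2, add_comm ({2 * m (2 * s + 2) + 2} : Multiset ℕ), Multiset.singleton_add]
    rfl

/-! ### The collapse -/

/-- Let `s ≥ 1` and `m 1 < m 2 < ⋯ < m (2s+1)` be nonnegative integers.
Let `p = [(2 m (2s+1) + 1) ⋯ (2 m 2 + 1)(2 m 1)]` (the part `2 m 1` omitted if
`m 1 = 0`) and `c = [(2 m (2s+1))(2 m (2s) + 2) ⋯ (2 m 3)(2 m 2 + 2)(2 m 1)]`.  Then
`c` is symplectic, dominated by `p`, and dominates every symplectic partition dominated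
by `p`; i.e. `c` is the Sp-collapse of `p`. -/
theorem spCollapse_of_odd_parts_with_even_tail
    (s : ℕ) (hs : 1 ≤ s)
    (m : ℕ → ℕ) (hm : ∀ i j, 1 ≤ i → i < j → j ≤ 2 * s + 1 → m i < m j) :
    IsSpCollapse
      (((Multiset.range (2 * s)).map fun i => 2 * m (i + 2) + 1) +
        (if 0 < m 1 then ({2 * m 1} : Multiset ℕ) else 0))
      ((∑ j ∈ Finset.range s,
          ({2 * m (2 * j + 3), 2 * m (2 * j + 2) + 2} : Multiset ℕ)) +
        (if 0 < m 1 then ({2 * m 1} : Multiset ℕ) else 0)) := by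
  rw [sum_pairs_eq]
  have hP : ((Multiset.range (2 * s)).map fun i => 2 * m (i + 2) + 1) =
      ∑ i ∈ Finset.range (2 * s), ({2 * m (i + 2) + 1} : Multiset ℕ) :=
    (sum_singleton_range _ _).symm
  have hif : (if 0 < m 1 then ({2 * m 1} : Multiset ℕ) else 0) =
      if 0 < 2 * m 1 then ({2 * m 1} : Multiset ℕ) else 0 :=
    if_congr (by omega) rfl rfl
  rw [hP, hif]
  have hcpos : ∀ i < 2 * s, 2 * m 1 < collapsePart m i := by
    intro i hi
    have := hm 1 (i + 2) le_rfl (by omega) (by omega)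
    unfold collapsePart
    split_ifs <;> omega
  have tP := topSum_parts (2 * s) (2 * m 1) (fun i => 2 * m (i + 2) + 1)
    (fun i j hij hj => by have := hm (i + 2) (j + 2) (by omega) (by omega) (by omega); simp; omega)
    (fun i hi => by have := hm 1 (i + 2) le_rfl (by omega) (by omega); simp; omega)
  have tC := topSum_parts (2 * s) (2 * m 1) (collapsePart m)
    (fun i j hij hj => by
      have := hm (i + 2) (j + 2) (by omega) (by omega) (by omega)
      unfold collapsePart
      split_ifs <;> omega)
    (fun i hi => (hcpos i hi).le)
  have mem_c : ∀ a ∈ (∑ i ∈ Finset.range (2 * s), ({collapsePart m i} : Multiset ℕ)) +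
      (if 0 < 2 * m 1 then ({2 * m 1} : Multiset ℕ) else 0), 0 < a ∧ Even a := by
    intro a ha
    rcases Multiset.mem_add.1 ha with ha | ha
    · obtain ⟨i, hi, ha⟩ := Multiset.mem_sum.1 ha
      rw [Multiset.mem_singleton] at ha
      subst ha
      exact ⟨(Nat.zero_le _).trans_lt (hcpos i (Finset.mem_range.1 hi)), even_collapsePart m i⟩
    · split_ifs at ha with h
      · rw [Multiset.mem_singleton] at ha
        subst ha
        exact ⟨h, even_two_mul _⟩
      · simp at ha
  have cardP : ((∑ i ∈ Finset.range (2 * s), ({2 * m (i + 2) + 1} : Multiset ℕ)) +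
      (if 0 < 2 * m 1 then ({2 * m 1} : Multiset ℕ) else 0)).card ≤ 2 * s + 1 := by
    split_ifs <;> simp
  have cardC : ((∑ i ∈ Finset.range (2 * s), ({collapsePart m i} : Multiset ℕ)) +
      (if 0 < 2 * m 1 then ({2 * m 1} : Multiset ℕ) else 0)).card ≤ 2 * s + 1 := by
    split_ifs <;> simp
  generalize (∑ i ∈ Finset.range (2 * s), ({2 * m (i + 2) + 1} : Multiset ℕ)) +
      (if 0 < 2 * m 1 then ({2 * m 1} : Multiset ℕ) else 0) = p at *
  generalize (∑ i ∈ Finset.range (2 * s), ({collapsePart m i} : Multiset ℕ)) +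
      (if 0 < 2 * m 1 then ({2 * m 1} : Multiset ℕ) else 0) = c at *
  have key : ∀ k, p.topSum k = c.topSum k + min k (2 * s) % 2 := by
    intro k
    rw [tP, tC, sum_odd_parts s m _ (min_le_right _ _)]
    omega
  have hsum : p.sum = c.sum := by
    rw [← topSum_of_card_le cardP, ← topSum_of_card_le cardC, key]
    omega
  refine ⟨fun h => (mem_c 0 h).1.ne rfl, fun a ha => ?_, ⟨hsum, fun k => by rw [key]; omega⟩,
    fun q _ hq hpq => ⟨hsum.symm.trans hpq.1, fun k => ?_⟩⟩
  · have : a ∉ c := fun h => Nat.not_even_iff_odd.2 ha (mem_c a h).2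
    rw [Multiset.count_eq_zero_of_notMem this]
    exact Even.zero
  · have hk := hpq.2 k
    by_contra! hlt
    have hkey := key k
    -- the only remaining case: `k` odd below `2 s`, and equality of partial sums of `q` and `p`
    have hodd : k % 2 = 1 ∧ k < 2 * s := by omega
    obtain ⟨k, rfl⟩ : ∃ l, k = l + 1 := ⟨k - 1, by omega⟩
    have h0 := hpq.2 k
    have h2 := hpq.2 (k + 2)
    have hp : p.topSum k + p.topSum (k + 2) < 2 * p.topSum (k + 1) := by
      have := hm (2 * s - 1 - (k + 1) + 2) (2 * s - 1 - k + 2) (by omega) (by omega) (by omega)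
      rw [tP, tP, tP, min_eq_left (by omega), min_eq_left (by omega), min_eq_left (by omega),
        if_neg (by omega), if_neg (by omega), if_neg (by omega), Finset.sum_range_succ _ (k + 1),
        Finset.sum_range_succ _ k]
      omega
    have hqe := even_topSum_of_drop hq k (by omega)
    have hce : Even (c.topSum (k + 1)) := by
      rw [tC, if_neg (by omega), add_zero]
      exact Finset.even_sum _ fun i _ => even_collapsePart m _
    rw [Nat.even_iff] at hqe hce
    omega
end

section
/- Let s ≥ 1 and let m_2 < m_3 < ⋯ < m_{2s+1} be integers with m_2 ≥ 0. Let p be the partition [(2m_{2s+1}+1)(2m_{2s}+1)⋯(2m_3+1)(2m_2+1)], and let c be the partition [(2m_{2s+1})(2m_{2s}+2)(2m_{2s−1})(2m_{2s−2}+2)⋯(2m_3)(2m_2+2)], i.e. with parts 2m_{2j+1} and 2m_{2j}+2 for j = s, s−1, …, 1. Then c is symplectic, c is dominated by p in the dominance order, and every symplectic partition dominated by p is dominated by c; that is, c is the Sp-collapse p_{Sp}. -/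
/-- The parts of `q` in decreasing order. -/
def descList (q : Multiset ℕ) : List ℕ := (q.sort (· ≤ ·)).reverse

lemma topSum_eq_take_descList (q : Multiset ℕ) (k : ℕ) :
    q.topSum k = ((descList q).take k).sum := rfl

lemma coe_descList (q : Multiset ℕ) : (descList q : Multiset ℕ) = q := by
  simp [descList, Multiset.coe_reverse]

lemma descList_pairwise (q : Multiset ℕ) : (descList q).Pairwise (· ≥ ·) := by
  rw [descList, List.pairwise_reverse]
  exact q.pairwise_sort (· ≤ ·)

lemma topSum_le_sum (q : Multiset ℕ) (k : ℕ) : q.topSum k ≤ q.sum := by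
  conv_rhs => rw [← coe_descList q, Multiset.sum_coe, ← List.sum_take_add_sum_drop _ k]
  exact Nat.le_add_right _ _

lemma topSum_of_card_le_s9 (q : Multiset ℕ) (k : ℕ) (h : q.card ≤ k) : q.topSum k = q.sum := by
  have hl : (descList q).length ≤ k := by
    rwa [← Multiset.coe_card, coe_descList]
  rw [topSum_eq_take_descList, List.take_of_length_le hl, ← Multiset.sum_coe, coe_descList]

/-- A weakly increasing enumeration of the parts computes the sums of the largest parts, by reading
the enumeration backwards. -/
lemma topSum_map_range (n k : ℕ) (hk : k ≤ n) (f : ℕ → ℕ)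
    (hf : ∀ i j, i < j → j < n → f i ≤ f j) :
    ((Multiset.range n).map f).topSum k = ∑ i ∈ Finset.range k, f (n - 1 - i) := by
  have hdesc : descList ((Multiset.range n).map f)
      = (List.range n).map fun i => f (n - 1 - i) := by
    refine List.Perm.eq_of_pairwise (le := (· ≥ ·)) (fun a b _ _ h1 h2 => le_antisymm h2 h1)
      (descList_pairwise _) ?_ ?_
    · rw [List.pairwise_map]
      refine List.Pairwise.imp_of_mem ?_ List.pairwise_lt_range
      intro a b _ hb hab
      have := List.mem_range.1 hb
      exact hf _ _ (by omega) (by omega)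
    · have hrev : ((List.range n).map fun i => f (n - 1 - i)) = ((List.range n).map f).reverse := by
        apply List.ext_getElem <;> simp
      rw [hrev, ← Multiset.coe_eq_coe, coe_descList, Multiset.coe_reverse]
      rfl
  rw [topSum_eq_take_descList, hdesc, ← List.map_take, List.take_range, min_eq_left hk]
  rfl

/-- If the first `k` parts of a symplectic partition have an odd sum, then some value occurs both
among them and among the remaining parts: otherwise each odd value would occur an even number of
times among the first `k` parts. -/
lemma exists_mem_take_mem_drop (q : Multiset ℕ) (hq : IsSymplectic q) (k : ℕ)
    (hodd : Odd (q.topSum k)) :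
    ∃ a, a ∈ (descList q).take k ∧ a ∈ (descList q).drop k := by
  by_contra! hdisj
  rw [← Nat.not_even_iff_odd] at hodd
  apply hodd
  rw [topSum_eq_take_descList, Finset.sum_list_count]
  refine Finset.even_sum _ fun a ha => ?_
  rw [smul_eq_mul]
  rcases Nat.even_or_odd a with hev | hao
  · exact hev.mul_left _
  · have hcount := hq a hao
    rw [← coe_descList q, Multiset.coe_count, ← List.take_append_drop k (descList q),
      List.count_append, List.count_eq_zero_of_not_mem (hdisj a (List.mem_toFinset.1 ha)),
      add_zero] at hcount
    exact hcount.mul_right _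

/-- An odd partial sum of a symplectic partition is never a point of strict concavity of the
sequence of partial sums. -/
lemma two_mul_topSum_le (q : Multiset ℕ) (hq : IsSymplectic q) (k : ℕ)
    (hodd : Odd (q.topSum (k + 1))) :
    2 * q.topSum (k + 1) ≤ q.topSum (k + 2) + q.topSum k := by
  obtain ⟨a, hat, had⟩ := exists_mem_take_mem_drop q hq (k + 1) hodd
  simp only [topSum_eq_take_descList]
  have hs := descList_pairwise q
  generalize descList q = L at *
  have hlen : k + 1 < L.length := by
    by_contra! h
    simp [List.drop_eq_nil_of_le h] at had
  have hge : ∀ i j, (hij : i ≤ j) → (hj : j < L.length) → L[j] ≤ L[i] := by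
    intro i j hij hj
    rcases hij.eq_or_lt with rfl | h
    · exact le_rfl
    · exact List.pairwise_iff_getElem.1 hs i j (by omega) hj h
  obtain ⟨i, hi, rfl⟩ := List.mem_iff_getElem.1 hat
  obtain ⟨j, hj, hij⟩ := List.mem_iff_getElem.1 had
  rw [List.length_take] at hi
  rw [List.length_drop] at hj
  rw [List.getElem_take, List.getElem_drop] at hij
  have h1 := hge i k (by omega) (by omega)
  have h2 := hge (k + 1) (k + 1 + j) (by omega) (by omega)
  have e1 := List.sum_take_succ L k (by omega)
  have e2 := List.sum_take_succ L (k + 1) hlen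
  rw [show k + 1 + 1 = k + 2 from rfl] at e2
  omega

/-- The parts of the collapse, enumerated in increasing order. -/
lemma collapse_eq_map_range (s : ℕ) (m : ℕ → ℕ) :
    (∑ j ∈ Finset.range s, ({2 * m (2 * j + 3), 2 * m (2 * j + 2) + 2} : Multiset ℕ))
      = (Multiset.range (2 * s)).map fun i => 2 * m (i + 2) + if Odd i then 0 else 2 := by
  induction s with
  | zero => rfl
  | succ s ih =>
    rw [Finset.sum_range_succ, ih, show 2 * (s + 1) = 2 * s + 1 + 1 by ring,
      Multiset.range_succ, Multiset.range_succ, Multiset.map_cons, Multiset.map_cons,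
      if_pos (by simp), if_neg (by simp), add_comm]
    rfl

/-- The `k` largest parts of the partition and of its collapse differ in sum by `k % 2`. -/
lemma sum_range_odd_eq (s : ℕ) (m : ℕ → ℕ) (k : ℕ) (hk : k ≤ 2 * s) :
    ∑ i ∈ Finset.range k, (2 * m (2 * s - 1 - i + 2) + 1)
      = ∑ i ∈ Finset.range k,
          (2 * m (2 * s - 1 - i + 2) + if Odd (2 * s - 1 - i) then 0 else 2) + k % 2 := by
  induction k with
  | zero => rfl
  | succ k ih =>
    rw [Finset.sum_range_succ, Finset.sum_range_succ, ih (by omega)]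
    split_ifs with h <;> rw [Nat.odd_iff] at h <;> omega

/-- Let `s ≥ 1` and `m 2 < m 3 < ⋯ < m (2s+1)` be nonnegative integers.
Let `p = [(2 m (2s+1) + 1)(2 m (2s) + 1) ⋯ (2 m 3 + 1)(2 m 2 + 1)]` and
`c = [(2 m (2s+1))(2 m (2s) + 2) ⋯ (2 m 3)(2 m 2 + 2)]`.  Then `c` is symplectic,
dominated by `p`, and dominates every symplectic partition dominated by `p`; i.e. `c`
is the Sp-collapse of `p`. -/
theorem spCollapse_of_odd_parts
    (s : ℕ) (hs : 1 ≤ s)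
    (m : ℕ → ℕ) (hm : ∀ i j, 2 ≤ i → i < j → j ≤ 2 * s + 1 → m i < m j) :
    IsSpCollapse
      ((Multiset.range (2 * s)).map fun i => 2 * m (i + 2) + 1)
      (∑ j ∈ Finset.range s,
        ({2 * m (2 * j + 3), 2 * m (2 * j + 2) + 2} : Multiset ℕ)) := by
  rw [collapse_eq_map_range]
  set p := (Multiset.range (2 * s)).map fun i => 2 * m (i + 2) + 1 with hp
  set c := (Multiset.range (2 * s)).map fun i => 2 * m (i + 2) + if Odd i then 0 else 2 with hc
  have hpcard : p.card = 2 * s := by simp [hp]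
  have hccard : c.card = 2 * s := by simp [hc]
  have hP : ∀ k, k ≤ 2 * s →
      p.topSum k = ∑ i ∈ Finset.range k, (2 * m (2 * s - 1 - i + 2) + 1) := by
    intro k hk
    refine topSum_map_range (2 * s) k hk _ fun i j hij hj => ?_
    have := hm (i + 2) (j + 2) (by omega) (by omega) (by omega)
    omega
  have hC : ∀ k, k ≤ 2 * s → p.topSum k = c.topSum k + k % 2 := by
    intro k hk
    rw [hP k hk, sum_range_odd_eq s m k hk, hc, topSum_map_range (2 * s) k hk]
    intro i j hij hj
    have := hm (i + 2) (j + 2) (by omega) (by omega) (by omega)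
    split_ifs <;> omega
  have hsum : p.sum = c.sum := by
    rw [← topSum_of_card_le_s9 p (2 * s) hpcard.le, ← topSum_of_card_le_s9 c (2 * s) hccard.le,
      hC _ le_rfl]
    omega
  have hbig : ∀ k, 2 * s ≤ k → c.topSum k = p.sum := fun k hk => by
    rw [topSum_of_card_le_s9 c k (hccard.trans_le hk), hsum]
  refine ⟨?_, ?_, ⟨hsum, fun k => ?_⟩, fun q _ hq hpq => ⟨hsum.symm.trans hpq.1, fun k => ?_⟩⟩
  · intro h0
    obtain ⟨i, hi, h⟩ := Multiset.mem_map.1 h0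
    have hi := Multiset.mem_range.1 hi
    split_ifs at h with ho
    -- An odd index `i` is at least `1`, so `m (i + 2)` exceeds `m 2 ≥ 0`.
    have := hm 2 (i + 2) le_rfl (by have := ho.pos; omega) (by omega)
    omega
  · intro a ha
    rw [Multiset.count_eq_zero_of_notMem]
    · exact Even.zero
    · intro hmem
      obtain ⟨i, -, h⟩ := Multiset.mem_map.1 hmem
      rw [Nat.odd_iff] at ha
      split_ifs at h <;> omega
  · rcases le_total k (2 * s) with hk | hk
    · have := hC k hk
      omega
    · rw [hbig k hk, topSum_of_card_le_s9 p k (hpcard.trans_le hk)]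
  · rcases le_total (2 * s) k with hk | hk
    · rw [hbig k hk, hpq.1]
      exact topSum_le_sum q k
    by_contra! hlt
    have hCk := hC k hk
    have hle := hpq.2 k
    have hkodd : k % 2 = 1 := by omega
    have heq : q.topSum k = p.topSum k := by omega
    obtain ⟨l, rfl⟩ : ∃ l, k = l + 1 := ⟨k - 1, by omega⟩
    have hpodd : Odd (p.topSum (l + 1)) := by
      rw [hP _ hk, Finset.sum_add_distrib, ← Finset.mul_sum, Finset.sum_const, Finset.card_range,
        smul_eq_mul, mul_one, Nat.odd_iff]
      omega
    have hconc := two_mul_topSum_le q hq l (heq ▸ hpodd)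
    have h0 := hpq.2 l
    have h2 := hpq.2 (l + 2)
    have e1 := hP (l + 1) hk
    -- `l + 1` is odd, so it differs from `2 * s` and one more part is available.
    have e2 := hP (l + 2) (by omega)
    rw [Finset.sum_range_succ, ← hP l (by omega)] at e1
    rw [Finset.sum_range_succ, ← hP (l + 1) hk] at e2
    have := hm (2 * s - 1 - (l + 1) + 2) (2 * s - 1 - l + 2) (by omega) (by omega) (by omega)
    omega
end
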